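/- If α is a real algebraic number that is irrational, then the complex number e^{2πiα} = Complex.exp(2πiα) is transcendental over ℚ. -/

import Mathlib

/-!
Suppose that `exp ℓ`, `β` and `exp (β * ℓ)` lie in a number field `K` of degree `d`, where `ℓ ≠ 0`
and `β` is irrational. By Siegel's lemma there are algebraic integers `ξ a b` of `K`, not all zero
and of controlled house, such that `F z = ∑ ξ a b * exp ((a + b * β) * ℓ * z)` vanishes to order `n`
at `0, …, m - 1`. The frequencies are distinct because `β` is irrational, so `F` is not zero and
there is a first order `r ≥ n` at which one of these zeros stops. Up to the factor `ℓ ^ r`, the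
derivative `F^(r)(l) ≠ 0` is an element of `K` whose conjugates and denominator are at most
`r ^ O(r)`, hence by Liouville it is at least `r ^ (-O(d * r))`, the constant being independent of
`m`. By the Schwarz lemma applied to the `m` zeros of order `r`, it is at most
`r ^ (O(r) - m * r / 2)`. This is absurd for `m` large compared with `d`.
-/

open Complex Filter NumberField

section EntireFunctions

variable {E : Type*} [NormedAddCommGroup E] [NormedSpace ℂ E] {F : ℂ → E}

theorem norm_le_of_forall_norm_eq (hF : Differentiable ℂ F) {R B : ℝ} (hR : 0 < R)
    (hB : ∀ z, ‖z‖ = R → ‖F z‖ ≤ B) {z : ℂ} (hz : ‖z‖ ≤ R) : ‖F z‖ ≤ B := by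
  refine norm_le_of_forall_mem_frontier_norm_le (U := Metric.ball 0 R) Metric.isBounded_ball
    hF.diffContOnCl (fun w hw => hB w ?_) ?_
  · simpa [frontier_ball (0 : ℂ) hR.ne'] using hw
  · simpa [closure_ball (0 : ℂ) hR.ne'] using hz

variable [CompleteSpace E]

theorem exists_differentiable_eq_pow_smul (hF : Differentiable ℂ F) {c : ℂ} {r : ℕ}
    (hr : r ≤ analyticOrderAt F c) :
    ∃ G : ℂ → E, Differentiable ℂ G ∧ ∀ z, F z = (z - c) ^ r • G z := by
  induction r generalizing F with
  | zero => exact ⟨F, hF, by simp⟩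
  | succ r ih =>
    have hFc : F c = 0 := by
      rw [← (hF.analyticAt c).analyticOrderAt_ne_zero]
      exact fun h => by simp [h] at hr
    have hdslope : Differentiable ℂ (dslope F c) := by
      rwa [← differentiableOn_univ, Complex.differentiableOn_dslope univ_mem,
        differentiableOn_univ]
    have hfactor : F = (fun z => z - c) • dslope F c := by
      ext z
      simp [hFc]
    have horder : analyticOrderAt F c = 1 + analyticOrderAt (dslope F c) c := by
      conv_lhs => rw [hfactor]
      rw [analyticOrderAt_smul (by fun_prop) (hdslope.analyticAt c),
        analyticOrderAt_id_sub_const_self]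
    obtain ⟨G, hG, hFG⟩ := ih hdslope <| by
      rwa [horder, Nat.cast_succ, add_comm, ENat.add_le_add_iff_left ENat.one_ne_top] at hr
    refine ⟨G, hG, fun z => ?_⟩
    rw [congrFun hfactor z, Pi.smul_apply', hFG, smul_smul, pow_succ']

theorem exists_differentiable_eq_prod_pow_smul (hF : Differentiable ℂ F) {s : Finset ℂ}
    {r : ℂ → ℕ} (hs : ∀ c ∈ s, r c ≤ analyticOrderAt F c) :
    ∃ G : ℂ → E, Differentiable ℂ G ∧ ∀ z, F z = (∏ c ∈ s, (z - c) ^ r c) • G z := by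
  induction s using Finset.induction_on with
  | empty => exact ⟨F, hF, by simp⟩
  | insert a s ha ih =>
    obtain ⟨G, hG, hFG⟩ := ih fun c hc => hs c (Finset.mem_insert_of_mem hc)
    have hprod : Differentiable ℂ fun z => ∏ c ∈ s, (z - c) ^ r c := by fun_prop
    have hprod_ne : ∏ c ∈ s, (a - c) ^ r c ≠ 0 := Finset.prod_ne_zero_iff.mpr fun c hc =>
      pow_ne_zero _ (sub_ne_zero.mpr fun hac => ha (hac ▸ hc))
    have horder : analyticOrderAt F a = analyticOrderAt G a := by
      rw [show F = (fun z => ∏ c ∈ s, (z - c) ^ r c) • G from funext hFG,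
        analyticOrderAt_smul (hprod.analyticAt a) (hG.analyticAt a),
        (hprod.analyticAt a).analyticOrderAt_eq_zero.mpr hprod_ne, zero_add]
    obtain ⟨G', hG', hGG'⟩ :=
      exists_differentiable_eq_pow_smul hG (horder ▸ hs a (Finset.mem_insert_self a s))
    refine ⟨G', hG', fun z => ?_⟩
    rw [hFG, hGG', smul_smul, Finset.prod_insert ha, mul_comm]

theorem norm_le_of_le_analyticOrderAt (hF : Differentiable ℂ F) {s : Finset ℂ} {r : ℕ}
    (hs : ∀ c ∈ s, r ≤ analyticOrderAt F c) {ρ ρ' R B : ℝ} (hρ : ∀ c ∈ s, ‖c‖ ≤ ρ) (hρ₀ : 0 ≤ ρ)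
    (hρR : ρ < R) (hB : ∀ z, ‖z‖ = R → ‖F z‖ ≤ B) (hρ' : ρ' ≤ R) {z : ℂ} (hz : ‖z‖ ≤ ρ') :
    ‖F z‖ ≤ ((ρ + ρ') / (R - ρ)) ^ (s.card * r) * B := by
  obtain ⟨G, hG, hFG⟩ := exists_differentiable_eq_prod_pow_smul hF (r := fun _ => r) hs
  have hRρ : 0 < R - ρ := sub_pos.mpr hρR
  have hρρ' : 0 ≤ ρ + ρ' := add_nonneg hρ₀ ((norm_nonneg z).trans hz)
  have hGR : ∀ w, ‖w‖ = R → ‖G w‖ ≤ B / (R - ρ) ^ (s.card * r) := by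
    intro w hw
    rw [le_div_iff₀' (pow_pos hRρ _)]
    calc (R - ρ) ^ (s.card * r) * ‖G w‖ = (∏ _c ∈ s, (R - ρ) ^ r) * ‖G w‖ := by
          rw [Finset.prod_const, ← pow_mul, mul_comm r]
      _ ≤ (∏ c ∈ s, ‖w - c‖ ^ r) * ‖G w‖ := by
          gcongr with c hc
          linarith [norm_sub_norm_le w c, hρ c hc]
      _ = ‖F w‖ := by rw [hFG, norm_smul, norm_prod]; simp only [norm_pow]
      _ ≤ B := hB w hw
  calc ‖F z‖ = (∏ c ∈ s, ‖z - c‖ ^ r) * ‖G z‖ := by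
        rw [hFG, norm_smul, norm_prod]; simp only [norm_pow]
    _ ≤ (∏ _c ∈ s, (ρ + ρ') ^ r) * (B / (R - ρ) ^ (s.card * r)) := by
        gcongr with c hc
        · linarith [norm_sub_le z c, hρ c hc]
        · exact norm_le_of_forall_norm_eq hG (hρ₀.trans_lt hρR) hGR (hz.trans hρ')
    _ = ((ρ + ρ') / (R - ρ)) ^ (s.card * r) * B := by
        rw [Finset.prod_const, ← pow_mul, mul_comm r, div_pow]; ring

theorem norm_iteratedDeriv_le_of_le_analyticOrderAt (hF : Differentiable ℂ F) {s : Finset ℂ}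
    {r : ℕ} (hs : ∀ c ∈ s, r ≤ analyticOrderAt F c) {ρ R B : ℝ} (hρ : ∀ c ∈ s, ‖c‖ ≤ ρ)
    (hρR : ρ + 1 ≤ R) (hB : ∀ z, ‖z‖ = R → ‖F z‖ ≤ B) {z₀ : ℂ} (hz₀ : ‖z₀‖ ≤ ρ) (k : ℕ) :
    ‖iteratedDeriv k F z₀‖ ≤ k.factorial * (((2 * ρ + 1) / (R - ρ)) ^ (s.card * r) * B) := by
  have hdisc : ∀ z ∈ Metric.sphere z₀ 1,
      ‖F z‖ ≤ ((2 * ρ + 1) / (R - ρ)) ^ (s.card * r) * B := by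
    intro z hz
    have hzρ : ‖z‖ ≤ ρ + 1 := by
      linarith [norm_sub_norm_le z z₀, mem_sphere_iff_norm.mp hz]
    convert norm_le_of_le_analyticOrderAt hF hs hρ ((norm_nonneg z₀).trans hz₀) (by linarith) hB
      hρR hzρ using 4
    ring
  simpa using norm_iteratedDeriv_le_of_forall_mem_sphere_norm_le k one_pos hF.diffContOnCl hdisc

end EntireFunctions

section ExponentialSums

variable {ι : Type*} [Fintype ι]

/-- The exponential polynomial `∑ i, ξ i * exp (w i * z)` with coefficients `ξ` and
frequencies `w`, playing the role of the auxiliary function. -/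
noncomputable def expSum (ξ w : ι → ℂ) (z : ℂ) : ℂ :=
  ∑ i, ξ i * exp (w i * z)

theorem differentiable_expSum (ξ w : ι → ℂ) : Differentiable ℂ (expSum ξ w) := by
  unfold expSum
  fun_prop

theorem iteratedDeriv_expSum (ξ w : ι → ℂ) (k : ℕ) (z : ℂ) :
    iteratedDeriv k (expSum ξ w) z = ∑ i, w i ^ k * exp (w i * z) * ξ i := by
  unfold expSum
  rw [iteratedDeriv_fun_sum fun i _ => by fun_prop]
  refine Finset.sum_congr rfl fun i _ => ?_
  rw [iteratedDeriv_const_mul_field, iteratedDeriv_cexp_const_mul, mul_comm]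

theorem norm_expSum_le {ξ w : ι → ℂ} {A W : ℝ} (hξ : ∀ i, ‖ξ i‖ ≤ A) (hw : ∀ i, ‖w i‖ ≤ W)
    (z : ℂ) : ‖expSum ξ w z‖ ≤ Fintype.card ι * (A * Real.exp (W * ‖z‖)) := by
  refine (norm_sum_le_of_le (f := fun i => ξ i * exp (w i * z))
    (n := fun _ => A * Real.exp (W * ‖z‖)) _ fun i _ => ?_).trans_eq (by simp)
  have hexp : ‖exp (w i * z)‖ ≤ Real.exp (W * ‖z‖) :=
    (norm_exp_le_exp_norm _).trans <| Real.exp_le_exp.mpr <| by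
      rw [norm_mul]; gcongr; exact hw i
  exact (norm_mul_le _ _).trans
    (mul_le_mul (hξ i) hexp (norm_nonneg _) ((norm_nonneg _).trans (hξ i)))

theorem norm_iteratedDeriv_expSum_le {ξ w : ι → ℂ} {A W : ℝ} (hξ : ∀ i, ‖ξ i‖ ≤ A)
    (hw : ∀ i, ‖w i‖ ≤ W) {m r : ℕ}
    (hzero : ∀ k < r, ∀ l < m, iteratedDeriv k (expSum ξ w) (l : ℂ) = 0)
    {R : ℝ} (hR : m + 1 ≤ R) {l₀ : ℕ} (hl₀ : l₀ < m) :
    ‖iteratedDeriv r (expSum ξ w) (l₀ : ℂ)‖ ≤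
      r.factorial * (((2 * m + 1) / (R - m)) ^ (m * r) *
        (Fintype.card ι * (A * Real.exp (W * R)))) := by
  have hF := differentiable_expSum ξ w
  have horder : ∀ c ∈ (Finset.range m).map Nat.castEmbedding,
      r ≤ analyticOrderAt (expSum ξ w) (c : ℂ) := by
    simp only [Finset.mem_map, Finset.mem_range, Nat.castEmbedding_apply]
    rintro _ ⟨l, hl, rfl⟩
    rw [natCast_le_analyticOrderAt_iff_iteratedDeriv_eq_zero (hF.analyticAt _)]
    exact fun k hk => hzero k hk l hl
  have hnorm : ∀ l : ℕ, l < m → ‖(l : ℂ)‖ ≤ m := fun l hl => by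
    rw [norm_natCast]; exact_mod_cast hl.le
  have hbound := norm_iteratedDeriv_le_of_le_analyticOrderAt hF horder (ρ := m)
    (by simpa [Nat.castEmbedding] using hnorm) hR
    (fun z hz => hz ▸ norm_expSum_le hξ hw z) (hnorm l₀ hl₀) r
  rwa [Finset.card_map, Finset.card_range] at hbound

end ExponentialSums

section MixedMoments

variable {ι K : Type*} [Fintype ι]

/-- The mixed moment `∑ i, w i ^ k * u i ^ l * ξ i`. When `u i = exp (w i * ℓ)` it is, up to the
factor `ℓ ^ k`, the `k`-th derivative at `l` of the exponential sum with coefficients `ξ` and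
frequencies `w i * ℓ`; see `iteratedDeriv_expSum_natCast`. -/
def mixedMoment [CommSemiring K] (ξ w u : ι → K) (k l : ℕ) : K :=
  ∑ i, w i ^ k * u i ^ l * ξ i

theorem mul_mixedMoment [CommSemiring K] (c : K) (ξ w u : ι → K) (k l : ℕ) :
    c * mixedMoment ξ w u k l = ∑ i, c * (w i ^ k * u i ^ l) * ξ i := by
  simp only [mixedMoment, Finset.mul_sum, mul_assoc]

theorem exists_mixedMoment_zero_ne_zero [CommRing K] [IsDomain K] {ξ w : ι → K} (u : ι → K)
    (hw : Function.Injective w) (hξ : ξ ≠ 0) : ∃ k, mixedMoment ξ w u k 0 ≠ 0 := by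
  by_contra! hzero
  let e := Fintype.equivFin ι
  have hvandermonde : ξ ∘ e.symm = 0 :=
    Matrix.eq_zero_of_forall_pow_sum_mul_pow_eq_zero (hw.comp e.symm.injective) fun k => by
      simpa [mixedMoment, ← e.symm.sum_comp, mul_comm] using hzero k
  exact hξ (funext fun i => by simpa using congrFun hvandermonde (e i))

theorem exists_first_mixedMoment_ne_zero [CommRing K] [IsDomain K] {ξ w u : ι → K}
    (hw : Function.Injective w) (hξ : ξ ≠ 0) {n m : ℕ} (hm : 0 < m)
    (hzero : ∀ k < n, ∀ l < m, mixedMoment ξ w u k l = 0) :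
    ∃ r ≥ n, (∃ l < m, mixedMoment ξ w u r l ≠ 0) ∧
      ∀ k < r, ∀ l < m, mixedMoment ξ w u k l = 0 := by
  classical
  have hex : ∃ k, ∃ l < m, mixedMoment ξ w u k l ≠ 0 :=
    (exists_mixedMoment_zero_ne_zero u hw hξ).imp fun _ hk => ⟨0, hm, hk⟩
  refine ⟨Nat.find hex, ?_, Nat.find_spec hex, fun k hk => by simpa using Nat.find_min hex hk⟩
  refine (Nat.le_find_iff hex n).mpr fun k hk => ?_
  simpa using hzero k hk

variable [CommSemiring K] {σ : K →+* ℂ} {w u : ι → K} {ℓ : ℂ}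

theorem iteratedDeriv_expSum_natCast (hu : ∀ i, exp (σ (w i) * ℓ) = σ (u i)) (ξ : ι → K)
    (k l : ℕ) :
    iteratedDeriv k (expSum (fun i => σ (ξ i)) fun i => σ (w i) * ℓ) (l : ℂ) =
      ℓ ^ k * σ (mixedMoment ξ w u k l) := by
  simp only [iteratedDeriv_expSum, mixedMoment, map_sum, map_mul, map_pow, Finset.mul_sum, ← hu,
    ← exp_nat_mul]
  exact Finset.sum_congr rfl fun i _ => by rw [mul_comm (σ (w i) * ℓ) l]; ring

theorem norm_map_mixedMoment_le (hu : ∀ i, exp (σ (w i) * ℓ) = σ (u i)) (hℓ : ℓ ≠ 0)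
    {ξ : ι → K} {A W R : ℝ} (hξ : ∀ i, ‖σ (ξ i)‖ ≤ A) (hw : ∀ i, ‖σ (w i) * ℓ‖ ≤ W) {m r : ℕ}
    (hzero : ∀ k < r, ∀ l < m, mixedMoment ξ w u k l = 0) (hR : m + 1 ≤ R) {l₀ : ℕ}
    (hl₀ : l₀ < m) :
    ‖σ (mixedMoment ξ w u r l₀)‖ ≤ ‖ℓ‖⁻¹ ^ r * (r.factorial *
      (((2 * m + 1) / (R - m)) ^ (m * r) * (Fintype.card ι * (A * Real.exp (W * R))))) := by
  have hderiv := norm_iteratedDeriv_expSum_le hξ hw (m := m) (r := r)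
    (fun k hk l hl => by rw [iteratedDeriv_expSum_natCast hu, hzero k hk l hl]; simp) hR hl₀
  rw [iteratedDeriv_expSum_natCast hu, norm_mul, norm_pow] at hderiv
  rw [inv_pow]
  exact (le_inv_mul_iff₀ (by positivity)).mpr hderiv

end MixedMoments

section HouseBounds

variable {K : Type*} [Field K] [NumberField K]

/-- `x` is an algebraic integer of house at most `B`. This is the size used to measure the
coefficients of the auxiliary function. -/
structure IsIntegralHouseLE (B : ℝ) (x : K) : Prop where
  isIntegral : IsIntegral ℤ x
  house_le : house x ≤ B

namespace IsIntegralHouseLE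

variable {B B₁ B₂ : ℝ} {x y : K}

theorem nonneg (hx : IsIntegralHouseLE B x) : 0 ≤ B :=
  (house_nonneg x).trans hx.house_le

theorem mono (hx : IsIntegralHouseLE B₁ x) (hB : B₁ ≤ B₂) : IsIntegralHouseLE B₂ x :=
  ⟨hx.isIntegral, hx.house_le.trans hB⟩

theorem norm_map_le (hx : IsIntegralHouseLE B x) (σ : K →+* ℂ) : ‖σ x‖ ≤ B :=
  (norm_embedding_le_house x σ).trans hx.house_le

theorem add (hx : IsIntegralHouseLE B₁ x) (hy : IsIntegralHouseLE B₂ y) :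
    IsIntegralHouseLE (B₁ + B₂) (x + y) :=
  ⟨hx.isIntegral.add hy.isIntegral,
    (house_add_le x y).trans (add_le_add hx.house_le hy.house_le)⟩

theorem mul (hx : IsIntegralHouseLE B₁ x) (hy : IsIntegralHouseLE B₂ y) :
    IsIntegralHouseLE (B₁ * B₂) (x * y) :=
  ⟨hx.isIntegral.mul hy.isIntegral, (house_mul_le x y).trans
    (mul_le_mul hx.house_le hy.house_le (house_nonneg y) hx.nonneg)⟩

theorem pow (hx : IsIntegralHouseLE B x) (n : ℕ) : IsIntegralHouseLE (B ^ n) (x ^ n) :=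
  ⟨hx.isIntegral.pow n,
    (house_pow_le x n).trans (pow_le_pow_left₀ (house_nonneg x) hx.house_le n)⟩

theorem natCast_mul (hx : IsIntegralHouseLE B x) (n : ℕ) :
    IsIntegralHouseLE (n * B) (n * x) :=
  ⟨(isIntegral_natCast n).mul hx.isIntegral, by
    rw [house_nat_mul]; exact mul_le_mul_of_nonneg_left hx.house_le n.cast_nonneg⟩

theorem sum {ι : Type*} [Fintype ι] {f : ι → K} (hf : ∀ i, IsIntegralHouseLE B (f i)) :
    IsIntegralHouseLE (Fintype.card ι * B) (∑ i, f i) :=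
  ⟨IsIntegral.sum _ fun i _ => (hf i).isIntegral, (house_sum_le_sum_house _ f).trans <| by
    simpa using Finset.sum_le_card_nsmul Finset.univ _ B fun i _ => (hf i).house_le⟩

theorem pow_mul_pow {c : K} (hc : IsIntegralHouseLE B c) (hcx : IsIntegralHouseLE B (c * x))
    {j n : ℕ} (hj : j ≤ n) : IsIntegralHouseLE (B ^ n) (c ^ n * x ^ j) := by
  obtain ⟨d, rfl⟩ := Nat.exists_eq_add_of_le' hj
  convert (hc.pow d).mul (hcx.pow j) using 1 <;> ring

/-- Liouville's inequality: the norm of `x` is a nonzero rational integer. -/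
theorem one_le_norm_map_mul_pow (hx : IsIntegralHouseLE B x) (hx₀ : x ≠ 0) (σ : K →+* ℂ) :
    1 ≤ ‖σ x‖ * B ^ (Module.finrank ℚ K - 1) := by
  obtain ⟨N, hN⟩ := IsIntegrallyClosed.isIntegral_iff.mp (Algebra.isIntegral_norm ℚ hx.isIntegral)
  have hN₀ : N ≠ 0 := by
    rintro rfl
    exact hx₀ (Algebra.norm_eq_zero_iff.mp (hN.symm.trans (map_zero _)))
  have hnorm : (1 : ℝ) ≤ ‖Algebra.norm ℚ x‖ := by
    rw [← hN, eq_intCast, Int.norm_cast_rat, Int.norm_eq_abs]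
    exact_mod_cast Int.one_le_abs hN₀
  calc 1 ≤ ‖σ x‖ * house x ^ (Module.finrank ℚ K - 1) :=
        hnorm.trans (norm_norm_le_norm_mul_house_pow x σ)
    _ ≤ ‖σ x‖ * B ^ (Module.finrank ℚ K - 1) := by
        gcongr
        exacts [house_nonneg x, hx.house_le]

end IsIntegralHouseLE

theorem exists_ne_zero_forall_isIntegralHouseLE_mul (s : Finset K) :
    ∃ c : K, c ≠ 0 ∧ ∃ H : ℝ, ∀ x ∈ s, IsIntegralHouseLE H (c * x) := by
  obtain ⟨c, hc, hint⟩ := exists_integral_multiples ℤ ℚ s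
  refine ⟨c, Int.cast_ne_zero.mpr hc, ∑ x ∈ s, house (c * x), fun x hx => ⟨?_, ?_⟩⟩
  · simpa using hint x hx
  · exact Finset.single_le_sum (f := fun x => house ((c : K) * x))
      (fun y _ => house_nonneg _) hx

variable (K) in
/-- Siegel's lemma for twice as many unknowns as equations, so that its exponent is `1`. -/
theorem exists_ne_zero_sum_mul_eq_zero_of_isIntegralHouseLE :
    ∃ C : ℝ, ∀ (ι κ : Type) [Fintype ι] [Fintype κ] (M : ι → κ → K) (B : ℝ), M ≠ 0 →
      0 < Fintype.card ι → Fintype.card κ = 2 * Fintype.card ι →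
      (∀ k i, IsIntegralHouseLE B (M k i)) →
      ∃ ξ : κ → K, ξ ≠ 0 ∧ (∀ k, ∑ i, M k i * ξ i = 0) ∧
        ∀ i, IsIntegralHouseLE (C * (C * Fintype.card κ * B)) (ξ i) := by
  classical
  -- The constant `NumberField.house.c₁` of the library is private: unification supplies `?C`.
  refine ⟨?C, fun ι κ _ _ M B hM hι hκ hMB => ?bound⟩
  case bound =>
    let M' : Matrix ι κ (𝓞 K) := fun k i => ⟨M k i, (hMB k i).isIntegral⟩
    have hM' : M' ≠ 0 := fun h => hM <| by
      ext k i
      exact congrArg (algebraMap (𝓞 K) K) (congrFun (congrFun h k) i)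
    obtain ⟨ξ, hξ, hM'ξ, hξB⟩ := house.exists_ne_zero_int_vec_house_le K M' hM' hι
      (by omega : Fintype.card ι < Fintype.card κ) rfl (fun k i => (hMB k i).house_le) rfl
    refine ⟨fun i => ξ i, fun h => hξ ?_, fun k => ?_, fun i => ⟨(ξ i).isIntegral_coe, ?_⟩⟩
    · ext i
      exact congrFun h i
    · have hrow : algebraMap (𝓞 K) K (∑ i, M' k i * ξ i) = 0 :=
        (congrArg (algebraMap (𝓞 K) K) (congrFun hM'ξ k)).trans (map_zero _)
      simp only [map_sum, map_mul] at hrow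
      exact hrow
    · have hexponent :
          (Fintype.card ι : ℝ) / ((Fintype.card κ : ℕ) - (Fintype.card ι : ℕ)) = 1 := by
        have : (Fintype.card ι : ℝ) ≠ 0 := by positivity
        rw [hκ, Nat.cast_mul, Nat.cast_two, two_mul, add_sub_cancel_right, div_self this]
      have hbound := hξB i
      rwa [hexponent, Real.rpow_one] at hbound

end HouseBounds

section LatticeFamily

variable {K : Type*} [Field K] {α β γ : K} {q : ℕ}

/-- The frequencies `a + b * β`, `0 ≤ a, b < q`, of the auxiliary function, in units of `ℓ`. -/
def latticeFrequency (β : K) (i : Fin q × Fin q) : K :=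
  (i.1 : ℕ) + (i.2 : ℕ) * β

/-- The numbers `α ^ a * γ ^ b`, which are the values `exp ((a + b * β) * ℓ)` when `α = exp ℓ` and
`γ = exp (β * ℓ)`. -/
def latticeValue (α γ : K) (i : Fin q × Fin q) : K :=
  α ^ (i.1 : ℕ) * γ ^ (i.2 : ℕ)

theorem latticeFrequency_injective [CharZero K] (hβ : β ∉ Set.range ((↑) : ℚ → K)) :
    Function.Injective (latticeFrequency β : Fin q × Fin q → K) := by
  rintro ⟨a, b⟩ ⟨a', b'⟩ h
  simp only [latticeFrequency] at h
  obtain rfl : b = b' := by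
    by_contra hb
    have hbK : ((b : ℕ) : K) - (b' : ℕ) ≠ 0 :=
      sub_ne_zero.mpr fun h => hb (Fin.ext (Nat.cast_injective h))
    refine hβ ⟨((a' : ℕ) - (a : ℕ)) / ((b : ℕ) - (b' : ℕ)), ?_⟩
    push_cast
    rw [div_eq_iff hbK]
    linear_combination -h
  exact Prod.ext (Fin.ext (Nat.cast_injective (add_right_cancel h))) rfl

theorem exp_map_latticeFrequency_mul {σ : K →+* ℂ} {ℓ : ℂ} (hα : exp ℓ = σ α)
    (hγ : exp (σ β * ℓ) = σ γ) (i : Fin q × Fin q) :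
    exp (σ (latticeFrequency β i) * ℓ) = σ (latticeValue α γ i) := by
  simp only [latticeFrequency, latticeValue, map_add, map_mul, map_pow, map_natCast, ← hα, ← hγ,
    ← exp_nat_mul, ← exp_add]
  ring_nf

theorem norm_map_latticeFrequency_le (σ : K →+* ℂ) (i : Fin q × Fin q) :
    ‖σ (latticeFrequency β i)‖ ≤ q * (1 + ‖σ β‖) := by
  have h₁ : ((i.1 : ℕ) : ℝ) ≤ q := by exact_mod_cast i.1.2.le
  have h₂ : ((i.2 : ℕ) : ℝ) ≤ q := by exact_mod_cast i.2.2.le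
  calc ‖σ (latticeFrequency β i)‖ ≤ (i.1 : ℕ) + (i.2 : ℕ) * ‖σ β‖ := by
        simpa [latticeFrequency] using norm_add_le ((i.1 : ℕ) : ℂ) ((i.2 : ℕ) * σ β)
    _ ≤ q + q * ‖σ β‖ := by gcongr
    _ = q * (1 + ‖σ β‖) := by ring

theorem norm_map_mixedMoment_lattice_le {σ : K →+* ℂ} {ℓ : ℂ} (hℓ : ℓ ≠ 0) (hα : exp ℓ = σ α)
    (hγ : exp (σ β * ℓ) = σ γ) {m r l : ℕ} (hq : 0 < q) (hqr : q ≤ r)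
    {ξ : Fin q × Fin q → K} {A : ℝ} (hξ : ∀ i, ‖σ (ξ i)‖ ≤ A)
    (hzero : ∀ k < r, ∀ l < m,
      mixedMoment ξ (latticeFrequency β) (latticeValue α γ) k l = 0) (hl : l < m) :
    ‖σ (mixedMoment ξ (latticeFrequency β) (latticeValue α γ) r l)‖ ≤
      ‖ℓ‖⁻¹ ^ r * (r.factorial * (((2 * m + 1) ^ m) ^ r / (m * r / q : ℝ) ^ (m * r) *
        (q ^ 2 * (A * Real.exp ((1 + ‖σ β‖) * ‖ℓ‖ * (2 * m)) ^ r)))) := by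
  have hq' : (0 : ℝ) < q := by exact_mod_cast hq
  have hqr' : (q : ℝ) ≤ r := by exact_mod_cast hqr
  have hm : (1 : ℝ) ≤ m := by exact_mod_cast (by omega : 1 ≤ m)
  have hA : 0 ≤ A := (norm_nonneg _).trans (hξ (⟨0, hq⟩, ⟨0, hq⟩))
  -- With radius `m + m * r / q` both `q * R` and the exponent of the growth of `F` are `O(r)`.
  set R : ℝ := m + m * r / q with hR
  have hmR : (m : ℝ) + 1 ≤ R := by
    rw [hR, add_le_add_iff_left, le_div_iff₀ hq', one_mul]
    nlinarith
  have hqR : q * R ≤ 2 * m * r := calc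
    q * R = m * q + m * r := by rw [hR]; field_simp
    _ ≤ m * r + m * r := by gcongr
    _ = 2 * m * r := by ring
  have hw : ∀ i : Fin q × Fin q, ‖σ (latticeFrequency β i) * ℓ‖ ≤ q * (1 + ‖σ β‖) * ‖ℓ‖ :=
    fun i => by
      rw [norm_mul]
      gcongr
      exact norm_map_latticeFrequency_le σ i
  have hexp : Real.exp (q * (1 + ‖σ β‖) * ‖ℓ‖ * R) ≤
      Real.exp ((1 + ‖σ β‖) * ‖ℓ‖ * (2 * m)) ^ r := by
    rw [← Real.exp_nat_mul, Real.exp_le_exp]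
    calc q * (1 + ‖σ β‖) * ‖ℓ‖ * R = (1 + ‖σ β‖) * ‖ℓ‖ * (q * R) := by ring
      _ ≤ (1 + ‖σ β‖) * ‖ℓ‖ * (2 * m * r) := by gcongr
      _ = r * ((1 + ‖σ β‖) * ‖ℓ‖ * (2 * m)) := by ring
  refine (norm_map_mixedMoment_le (exp_map_latticeFrequency_mul hα hγ) hℓ hξ hw hzero hmR
    hl).trans ?_
  rw [show R - m = m * r / q by rw [hR]; ring, div_pow, pow_mul (2 * (m : ℝ) + 1),
    Fintype.card_prod, Fintype.card_fin, Nat.cast_mul, ← sq]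
  gcongr

variable [NumberField K] {c : K} {H : ℝ}

theorem isIntegralHouseLE_mul_latticeFrequency (hc : IsIntegralHouseLE H c)
    (hcβ : IsIntegralHouseLE H (c * β)) (i : Fin q × Fin q) :
    IsIntegralHouseLE (2 * q * H) (c * latticeFrequency β i) := by
  have h₁ : ((i.1 : ℕ) : ℝ) ≤ q := by exact_mod_cast i.1.2.le
  have h₂ : ((i.2 : ℕ) : ℝ) ≤ q := by exact_mod_cast i.2.2.le
  have hH := hc.nonneg
  convert ((hc.natCast_mul i.1).add (hcβ.natCast_mul i.2)).mono
    (by gcongr : _ ≤ (q : ℝ) * H + q * H) using 1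
  · ring
  · rw [latticeFrequency]; ring

theorem isIntegralHouseLE_pow_mul_latticeValue_pow (hc : IsIntegralHouseLE H c)
    (hcα : IsIntegralHouseLE H (c * α)) (hcγ : IsIntegralHouseLE H (c * γ)) {l m : ℕ} (hl : l ≤ m)
    (i : Fin q × Fin q) :
    IsIntegralHouseLE (H ^ (2 * (q * m))) (c ^ (2 * (q * m)) * latticeValue α γ i ^ l) := by
  convert (hc.pow_mul_pow hcα (Nat.mul_le_mul i.1.2.le hl)).mul
    (hc.pow_mul_pow hcγ (Nat.mul_le_mul i.2.2.le hl)) using 1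
  · ring
  · rw [latticeValue]; ring

/-- The element `c` is a common denominator of `1`, `α`, `β` and `γ`, leaving algebraic integers
of house at most `H`. -/
structure IsCommonDenominator (α β γ c : K) (H : ℝ) : Prop where
  ne_zero : c ≠ 0
  one : IsIntegralHouseLE H c
  alpha : IsIntegralHouseLE H (c * α)
  beta : IsIntegralHouseLE H (c * β)
  gamma : IsIntegralHouseLE H (c * γ)

theorem exists_isCommonDenominator (α β γ : K) : ∃ c H, IsCommonDenominator α β γ c H := by
  classical
  obtain ⟨c, hc, H, hcH⟩ := exists_ne_zero_forall_isIntegralHouseLE_mul {1, α, β, γ}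
  exact ⟨c, H, hc, mul_one c ▸ hcH 1 (by simp), hcH α (by simp), hcH β (by simp), hcH γ (by simp)⟩

theorem IsCommonDenominator.isIntegralHouseLE_coeff (hc : IsCommonDenominator α β γ c H) {m t r : ℕ}
    (ht : 0 < t) (hHt : 2 * H ≤ t) (hmt : 2 * m ≤ t) (hq : 0 < q) (hqt : q * t ≤ r) {k l : ℕ}
    (hk : k ≤ r) (hl : l ≤ m) (i : Fin q × Fin q) :
    IsIntegralHouseLE (r ^ (2 * r))
      (c ^ (k + 2 * (q * m)) * (latticeFrequency β i ^ k * latticeValue α γ i ^ l)) := by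
  have hH := hc.one.nonneg
  have hr : (1 : ℝ) ≤ r := by exact_mod_cast (Nat.mul_pos hq ht).trans_le hqt
  have htr : (t : ℝ) ≤ r := by exact_mod_cast (Nat.le_mul_of_pos_left t hq).trans hqt
  have hqH : 2 * q * H ≤ r := calc
    2 * q * H = q * (2 * H) := by ring
    _ ≤ q * t := by gcongr
    _ ≤ r := by exact_mod_cast hqt
  have hqm : 2 * (q * m) ≤ r := calc
    2 * (q * m) = q * (2 * m) := by ring
    _ ≤ q * t := by gcongr
    _ ≤ r := hqt
  have hbound : (2 * q * H) ^ k * H ^ (2 * (q * m)) ≤ (r : ℝ) ^ (2 * r) := calc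
    (2 * q * H) ^ k * H ^ (2 * (q * m)) ≤ (r : ℝ) ^ k * (r : ℝ) ^ (2 * (q * m)) := by
      gcongr
      linarith
    _ ≤ (r : ℝ) ^ r * (r : ℝ) ^ r := by gcongr
    _ = (r : ℝ) ^ (2 * r) := by ring
  convert (((isIntegralHouseLE_mul_latticeFrequency hc.one hc.beta i).pow k).mul
    (isIntegralHouseLE_pow_mul_latticeValue_pow hc.one hc.alpha hc.gamma hl i)).mono hbound using 1
  ring

end LatticeFamily

section GelfondSchneider

variable {K : Type*} [Field K] [NumberField K] {α β γ c : K} {H : ℝ} {m q : ℕ}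

theorem IsCommonDenominator.eventually_exists_mixedMoment_eq_zero
    (hc : IsCommonDenominator α β γ c H) (hm : 0 < m) :
    ∀ᶠ t : ℕ in atTop, ∀ q n : ℕ, 0 < q → q * t = n → q ^ 2 = 2 * m * n →
      ∃ ξ : Fin q × Fin q → K, ξ ≠ 0 ∧
        (∀ i, IsIntegralHouseLE (n ^ (3 * n)) (ξ i)) ∧
        ∀ k < n, ∀ l < m, mixedMoment ξ (latticeFrequency β) (latticeValue α γ) k l = 0 := by
  obtain ⟨C, hC⟩ := exists_ne_zero_sum_mul_eq_zero_of_isIntegralHouseLE K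
  filter_upwards [eventually_ge_atTop 3, eventually_ge_atTop (2 * m),
    tendsto_natCast_atTop_atTop.eventually_ge_atTop (2 * H),
    tendsto_natCast_atTop_atTop.eventually_ge_atTop (C * C)] with t ht hmt hHt hCt q n hq hqt hqn
  have htn : t ≤ n := hqt ▸ Nat.le_mul_of_pos_left t hq
  have hqn' : q ≤ n := hqt ▸ Nat.le_mul_of_pos_right q (by omega)
  have hn : (1 : ℝ) ≤ n := by exact_mod_cast (by omega : 1 ≤ n)
  let M : Fin n × Fin m → Fin q × Fin q → K := fun k i => c ^ ((k.1 : ℕ) + 2 * (q * m)) *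
    (latticeFrequency β i ^ (k.1 : ℕ) * latticeValue α γ i ^ (k.2 : ℕ))
  have hM : M ≠ 0 := fun h => pow_ne_zero (2 * (q * m)) hc.ne_zero <| by
    simpa [M] using congrFun₂ h (⟨0, by omega⟩, ⟨0, hm⟩) (⟨0, hq⟩, ⟨0, hq⟩)
  obtain ⟨ξ, hξ, hMξ, hξC⟩ := hC (Fin n × Fin m) (Fin q × Fin q) M (n ^ (2 * n)) hM
    (by simp only [Fintype.card_prod, Fintype.card_fin]; exact Nat.mul_pos (by omega) hm)
    (by simp only [Fintype.card_prod, Fintype.card_fin]; rw [← sq, hqn]; ring)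
    (fun k i => hc.isIntegralHouseLE_coeff (by omega) hHt hmt hq hqt.le k.1.2.le k.2.2.le i)
  refine ⟨ξ, hξ, fun i => (hξC i).mono ?_, fun k hk l hl => ?_⟩
  · calc C * (C * Fintype.card (Fin q × Fin q) * (n : ℝ) ^ (2 * n))
        = C * C * ((q : ℝ) * q * (n : ℝ) ^ (2 * n)) := by
          simp only [Fintype.card_prod, Fintype.card_fin, Nat.cast_mul]; ring
      _ ≤ n * ((n : ℝ) * n * (n : ℝ) ^ (2 * n)) := by
          gcongr
          exact hCt.trans (by exact_mod_cast htn)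
      _ = (n : ℝ) ^ (3 + 2 * n) := by ring
      _ ≤ (n : ℝ) ^ (3 * n) := pow_le_pow_right₀ hn (by omega)
  · refine (mul_eq_zero_iff_left (pow_ne_zero (k + 2 * (q * m)) hc.ne_zero)).mp ?_
    rw [mul_mixedMoment]
    exact hMξ (⟨k, hk⟩, ⟨l, hl⟩)

theorem IsCommonDenominator.isIntegralHouseLE_mixedMoment (hc : IsCommonDenominator α β γ c H)
    {t r l : ℕ} (hHt : 2 * H ≤ t) (hmt : 2 * m ≤ t) (hq : 0 < q) (hqt : q * t ≤ r) (hl : l < m)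
    {ξ : Fin q × Fin q → K} (hξ : ∀ i, IsIntegralHouseLE (r ^ (3 * r)) (ξ i)) :
    IsIntegralHouseLE (r ^ (6 * r)) (c ^ (r + 2 * (q * m)) *
      mixedMoment ξ (latticeFrequency β) (latticeValue α γ) r l) := by
  have hr : 2 ≤ r := by linarith [Nat.le_mul_of_pos_left t hq]
  have hr' : (1 : ℝ) ≤ r := by exact_mod_cast (by omega : 1 ≤ r)
  have hqr : q ≤ r := (Nat.le_mul_of_pos_right q (by omega)).trans hqt
  rw [mul_mixedMoment]
  refine (IsIntegralHouseLE.sum fun i =>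
    (hc.isIntegralHouseLE_coeff (by omega) hHt hmt hq hqt le_rfl hl.le i).mul (hξ i)).mono ?_
  calc (Fintype.card (Fin q × Fin q) : ℝ) * ((r : ℝ) ^ (2 * r) * (r : ℝ) ^ (3 * r))
      = (q : ℝ) * q * ((r : ℝ) ^ (2 * r) * (r : ℝ) ^ (3 * r)) := by simp
    _ ≤ (r : ℝ) * r * ((r : ℝ) ^ (2 * r) * (r : ℝ) ^ (3 * r)) := by gcongr
    _ = (r : ℝ) ^ (2 + 5 * r) := by ring
    _ ≤ (r : ℝ) ^ (6 * r) := pow_le_pow_right₀ hr' (by omega)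

variable {σ : K →+* ℂ} {ℓ : ℂ}

theorem IsCommonDenominator.norm_map_mixedMoment_le (hc : IsCommonDenominator α β γ c H)
    (hℓ : ℓ ≠ 0) (hα : exp ℓ = σ α) (hγ : exp (σ β * ℓ) = σ γ) {t r l : ℕ} (hHt : 2 * H ≤ t)
    (hmt : (2 * m + 1) ^ m ≤ t) (hℓt : ‖ℓ‖⁻¹ ≤ t)
    (hexpt : Real.exp ((1 + ‖σ β‖) * ‖ℓ‖ * (2 * m)) ≤ t) (hq : 0 < q) (hqt : q * t ≤ r)
    {ξ : Fin q × Fin q → K} (hξ : ∀ i, IsIntegralHouseLE (r ^ (3 * r)) (ξ i))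
    (hzero : ∀ k < r, ∀ l < m,
      mixedMoment ξ (latticeFrequency β) (latticeValue α γ) k l = 0) (hl : l < m) :
    ‖σ (c ^ (r + 2 * (q * m)) *
        mixedMoment ξ (latticeFrequency β) (latticeValue α γ) r l)‖ ≤
      (r : ℝ) ^ (10 * r) / (m * r / q : ℝ) ^ (m * r) := by
  have hmt₁ : 2 * m + 1 ≤ t := (Nat.le_self_pow (by omega) _).trans hmt
  have htr : t ≤ r := (Nat.le_mul_of_pos_left t hq).trans hqt
  have htr' : (t : ℝ) ≤ r := by exact_mod_cast htr
  have hr : (1 : ℝ) ≤ r := by exact_mod_cast (by omega : 1 ≤ r)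
  have hqr : q ≤ r := (Nat.le_mul_of_pos_right q (by omega)).trans hqt
  have hqm : 2 * (q * m) ≤ r := by nlinarith
  have hcr : ‖σ c‖ ≤ r := by linarith [hc.one.norm_map_le σ, hc.one.nonneg]
  have hmr : ((2 * m + 1 : ℝ)) ^ m ≤ r := by exact_mod_cast hmt.trans htr
  have hfactorial : (r.factorial : ℝ) ≤ (r : ℝ) ^ r := by exact_mod_cast Nat.factorial_le_pow r
  rw [map_mul, map_pow, norm_mul, norm_pow]
  calc ‖σ c‖ ^ (r + 2 * (q * m)) * ‖σ (mixedMoment ξ _ _ r l)‖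
      ≤ (r : ℝ) ^ (r + 2 * (q * m)) * (‖ℓ‖⁻¹ ^ r * (r.factorial *
          (((2 * m + 1) ^ m) ^ r / (m * r / q : ℝ) ^ (m * r) *
          (q ^ 2 * ((r : ℝ) ^ (3 * r) * Real.exp ((1 + ‖σ β‖) * ‖ℓ‖ * (2 * m)) ^ r))))) := by
        gcongr
        exact norm_map_mixedMoment_lattice_le hℓ hα hγ hq hqr
          (fun i => (hξ i).norm_map_le σ) hzero hl
    _ ≤ (r : ℝ) ^ (r + r) * ((r : ℝ) ^ r * ((r : ℝ) ^ r *
          ((r : ℝ) ^ r / (m * r / q : ℝ) ^ (m * r) *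
          ((r : ℝ) ^ 2 * ((r : ℝ) ^ (3 * r) * (r : ℝ) ^ r))))) := by
        gcongr
        exacts [hℓt.trans htr', hexpt.trans htr']
    _ = (r : ℝ) ^ (2 + 9 * r) / (m * r / q : ℝ) ^ (m * r) := by ring
    _ ≤ (r : ℝ) ^ (10 * r) / (m * r / q : ℝ) ^ (m * r) := by
        gcongr
        omega

/-- Since `r ≤ (m * r / q) ^ 2`, the hypothesis compares powers of `r`. -/
theorem le_of_one_le_pow_div_mul_pow {m q r a b e : ℕ} (hm : 2 ≤ m) (hq : 0 < q) (hr : 2 ≤ r)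
    (hqr : q ^ 2 ≤ 2 * m * r)
    (h : 1 ≤ (r : ℝ) ^ (a * r) / (m * r / q : ℝ) ^ (m * r) * ((r : ℝ) ^ (b * r)) ^ e) :
    m ≤ 2 * (a + b * e) := by
  have hq' : (0 : ℝ) < q := by exact_mod_cast hq
  have hr' : (1 : ℝ) < r := by exact_mod_cast hr
  have hm' : (2 : ℝ) ≤ m := by exact_mod_cast hm
  have hqr' : (q : ℝ) ^ 2 ≤ 2 * m * r := by exact_mod_cast hqr
  have hsq : (r : ℝ) ≤ (m * r / q) ^ 2 := by
    rw [div_pow, le_div_iff₀ (by positivity)]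
    calc (r : ℝ) * q ^ 2 ≤ r * (2 * m * r) := by gcongr
      _ = 2 * (m * r ^ 2) := by ring
      _ ≤ m * (m * r ^ 2) := by gcongr
      _ = (m * r) ^ 2 := by ring
  have hpow : (m * r / q : ℝ) ^ (m * r) ≤ (r : ℝ) ^ ((a + b * e) * r) := by
    rw [div_mul_eq_mul_div, le_div_iff₀ (by positivity), one_mul] at h
    exact h.trans_eq (by ring)
  have hexponent : (r : ℝ) ^ (m * r) ≤ (r : ℝ) ^ (2 * (a + b * e) * r) := calc
    (r : ℝ) ^ (m * r) ≤ ((m * r / q : ℝ) ^ 2) ^ (m * r) := by gcongr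
    _ = ((m * r / q : ℝ) ^ (m * r)) ^ 2 := by rw [← pow_mul, ← pow_mul, mul_comm 2]
    _ ≤ ((r : ℝ) ^ ((a + b * e) * r)) ^ 2 := by gcongr
    _ = (r : ℝ) ^ (2 * (a + b * e) * r) := by ring
  exact Nat.le_of_mul_le_mul_right ((pow_le_pow_iff_right₀ hr').mp hexponent) (by omega)

theorem mem_range_ratCast_of_exp_eq (hℓ : ℓ ≠ 0) (hα : exp ℓ = σ α)
    (hγ : exp (σ β * ℓ) = σ γ) : β ∈ Set.range ((↑) : ℚ → K) := by
  by_contra hβ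
  obtain ⟨c, H, hc⟩ := exists_isCommonDenominator α β γ
  -- The number `m` of interpolation points is the least that violates the conclusion of
  -- `le_of_one_le_pow_div_mul_pow` with `a = 10`, `b = 6` and `e` the exponent in Liouville's
  -- inequality.
  obtain ⟨m, hm⟩ : ∃ m, m = 2 * (10 + 6 * (Module.finrank ℚ K - 1)) + 1 := ⟨_, rfl⟩
  obtain ⟨t, haux, hmt, hmt', hHt, hℓt, hexpt⟩ :=
    ((hc.eventually_exists_mixedMoment_eq_zero (by omega : 0 < m)).and <|
      (eventually_ge_atTop (2 * m)).and <| (eventually_ge_atTop ((2 * m + 1) ^ m)).and <|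
      (tendsto_natCast_atTop_atTop.eventually_ge_atTop (2 * H)).and <|
      (tendsto_natCast_atTop_atTop.eventually_ge_atTop ‖ℓ‖⁻¹).and <|
      tendsto_natCast_atTop_atTop.eventually_ge_atTop
        (Real.exp ((1 + ‖σ β‖) * ‖ℓ‖ * (2 * m)))).exists
  obtain ⟨q, hq⟩ : ∃ q, q = 2 * m * t := ⟨_, rfl⟩
  have hq₀ : 0 < q := hq ▸ Nat.mul_pos (by omega) (by omega)
  have hqn : q ^ 2 = 2 * m * (q * t) := by rw [hq]; ring
  obtain ⟨ξ, hξ, hξn, hvanish⟩ := haux q (q * t) hq₀ rfl hqn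
  obtain ⟨r, hnr, ⟨l, hl, hne⟩, hzero⟩ := exists_first_mixedMoment_ne_zero
    (latticeFrequency_injective hβ) hξ (by omega) hvanish
  have hr : 2 ≤ r := by linarith [Nat.le_mul_of_pos_left t hq₀]
  have hξr : ∀ i, IsIntegralHouseLE (r ^ (3 * r)) (ξ i) := fun i => (hξn i).mono <| by
    exact_mod_cast (Nat.pow_le_pow_left hnr _).trans (Nat.pow_le_pow_right (by omega) (by omega))
  have hlower := (hc.isIntegralHouseLE_mixedMoment hHt hmt hq₀ hnr hl hξr).one_le_norm_map_mul_pow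
    (mul_ne_zero (pow_ne_zero _ hc.ne_zero) hne) σ
  have hupper := hc.norm_map_mixedMoment_le hℓ hα hγ hHt hmt' hℓt hexpt hq₀ hnr hξr hzero hl
  have := le_of_one_le_pow_div_mul_pow (by omega) hq₀ hr
    (hqn.trans_le (Nat.mul_le_mul_left _ hnr))
    (hlower.trans (mul_le_mul_of_nonneg_right hupper (by positivity)))
  omega

end GelfondSchneider

/-- The Gelfond–Schneider theorem, with `ℓ` any nonzero logarithm of an algebraic number. -/
theorem exp_two_pi_I_algebraic_irrational_transcendental_general {ℓ β : ℂ} (hℓ : ℓ ≠ 0)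
    (hα : IsAlgebraic ℚ (exp ℓ)) (hβ : IsAlgebraic ℚ β) (hirr : β ∉ Set.range ((↑) : ℚ → ℂ)) :
    Transcendental ℚ (exp (ℓ * β)) := by
  intro hγ
  let K := IntermediateField.adjoin ℚ ({exp ℓ, β, exp (ℓ * β)} : Set ℂ)
  have : FiniteDimensional ℚ K := IntermediateField.finiteDimensional_adjoin <| by
    rintro z (rfl | rfl | rfl)
    exacts [hα.isIntegral, hβ.isIntegral, hγ.isIntegral]
  have : NumberField K := ⟨⟩
  have hsub : {exp ℓ, β, exp (ℓ * β)} ⊆ (K : Set ℂ) := IntermediateField.subset_adjoin _ _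
  obtain ⟨x, hx⟩ := mem_range_ratCast_of_exp_eq (σ := algebraMap K ℂ)
    (α := ⟨exp ℓ, hsub (by simp)⟩) (β := ⟨β, hsub (by simp)⟩) (γ := ⟨exp (ℓ * β), hsub (by simp)⟩)
    hℓ rfl (congrArg exp (mul_comm β ℓ))
  exact hirr ⟨x, by simpa using congrArg (algebraMap K ℂ) hx⟩

/-- If `α` is a real algebraic number which is irrational, then
`e^{2πiα}` is transcendental over `ℚ` (Gelfond–Schneider). -/
theorem exp_two_pi_I_algebraic_irrational_transcendental
    (α : ℝ) (halg : IsAlgebraic ℚ α) (hirr : Irrational α) :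
    Transcendental ℚ (Complex.exp (2 * Real.pi * Complex.I * α)) :=
  exp_two_pi_I_algebraic_irrational_transcendental_general two_pi_I_ne_zero
    (exp_two_pi_mul_I ▸ isAlgebraic_one) halg.algebraMap
    fun ⟨x, hx⟩ => hirr ⟨x, by exact_mod_cast hx⟩
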